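/- There exist a function f : [0,1]^2 → ℝ belonging to C^{1,α}([0,1]^2) for every α ∈ (0,1), and a compact set K ⊂ [0,1]^2 with two-dimensional Lebesgue measure L²(K) = r > 0, such that ∇f(x) = 0 for every x ∈ K and the pushforward measure satisfies f_#(𝟙_K L²) = r · 𝟙_{[0,1]} L¹, i.e. the pushforward by f of Lebesgue measure restricted to K equals r times one-dimensional Lebesgue measure restricted to [0,1]. -/

import Mathlib

open MeasureTheory Set

noncomputable section

/-- The unit square `[0,1]²` in the Euclidean plane. -/
def unitSquare : Set (EuclideanSpace ℝ (Fin 2)) := {x | ∀ i, x i ∈ Set.Icc (0:ℝ) 1}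

/-- `f` is of class `C^{1,α}` on `[0,1]²`: continuously differentiable with gradient
Hölder continuous of exponent `α`. -/
def IsC1Holder (f : EuclideanSpace ℝ (Fin 2) → ℝ) (α : ℝ) : Prop :=
  DifferentiableOn ℝ f unitSquare ∧
  ContinuousOn (fderivWithin ℝ f unitSquare) unitSquare ∧
  ∃ C : ℝ, ∀ x ∈ unitSquare, ∀ y ∈ unitSquare,
    ‖fderivWithin ℝ f unitSquare x - fderivWithin ℝ f unitSquare y‖ ≤ C * dist x y ^ α

/-! Let `C` be the fat Cantor set obtained by inserting a gap into a line segment at every dyadic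
point, of length about `2⁻ⁿ / n²` at the dyadic points of level `n`. The derivative of `g` is a sum
of bumps supported in the gaps, so `g` is critical on `C` and grows only across the gaps, by
`4⁻ⁿ / 6` at level `n`. These are the jumps of the quantile function of `∑ ε_k 4⁻ᵏ` with
independent fair digits `ε_k`, so `g` pushes normalised Lebesgue measure on `C` to the law of this
series. Since `4⁻ⁿ` is `O((2⁻ⁿ / n²) ^ (1 + α))` for all `α < 1`, the bumps are uniformly
`α`-Hölder.

If `X` and `Y` are independent with the law of `∑ ε_k 4⁻ᵏ`, then `2 X + Y` has independent fair
binary digits, hence is uniform on `[0, 1]`. So take `f x = 2 g(x₀) + g(x₁)` and `K = C × C`. -/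

open Filter Topology
open scoped ENNReal NNReal

section SelfSimilar

lemma eq_zero_of_norm_le_norm_smul {E F : Type*} [NormedAddCommGroup E] [NormedSpace ℝ E]
    [NormedAddCommGroup F] {D : E → F} (hD : ContinuousAt D 0) (hD0 : D 0 = 0) {r : ℝ}
    (hr : |r| < 1) (h : ∀ t, ‖D t‖ ≤ ‖D (r • t)‖) : D = 0 := by
  funext t
  have iterate (n : ℕ) : ‖D t‖ ≤ ‖D (r ^ n • t)‖ := by
    induction n with
    | zero => simp
    | succ n ih => exact ih.trans ((h _).trans_eq (by rw [smul_smul, pow_succ']))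
  have contract : Tendsto (fun n : ℕ => r ^ n • t) atTop (𝓝 0) := by
    simpa using (tendsto_pow_atTop_nhds_zero_of_abs_lt_one hr).smul_const t
  have limit : Tendsto (fun n : ℕ => ‖D (r ^ n • t)‖) atTop (𝓝 0) := by
    simpa [hD0] using (hD.tendsto.comp contract).norm
  exact norm_le_zero_iff.1 (ge_of_tendsto' limit iterate)

variable {E : Type*} [NormedAddCommGroup E] [InnerProductSpace ℝ E] [MeasurableSpace E]

/-- `μ` is the law of a series `∑_{k ≥ 1} m⁻ᵏ ε_k` with independent terms `ε_k` of law `β`. It is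
encoded by the distributional equation `m X ∼ X + ε`, with `X ∼ μ` and `ε ∼ β` independent. -/
def IsSelfSimilar (m : ℝ) (β μ : Measure E) : Prop :=
  μ.map (m • ·) = μ ∗ β

variable [BorelSpace E] [SecondCountableTopology E] [CompleteSpace E] {m : ℝ} {β μ ν : Measure E}

lemma isSelfSimilar_iff_charFun [IsFiniteMeasure β] [IsFiniteMeasure μ] :
    IsSelfSimilar m β μ ↔ ∀ t, charFun μ (m • t) = charFun μ t * charFun β t := by
  simp_rw [← charFun_conv, ← charFun_map_smul]
  exact ⟨fun h t => by rw [h], fun h => Measure.ext_of_charFun (funext h)⟩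

namespace IsSelfSimilar

lemma unique [IsProbabilityMeasure β] [IsProbabilityMeasure μ] [IsProbabilityMeasure ν]
    (hm : 1 < |m|) (hμ : IsSelfSimilar m β μ) (hν : IsSelfSimilar m β ν) : μ = ν := by
  rw [isSelfSimilar_iff_charFun] at hμ hν
  have hm0 : m ≠ 0 := abs_pos.1 (one_pos.trans hm)
  refine Measure.ext_of_charFun (sub_eq_zero.1 (eq_zero_of_norm_le_norm_smul (r := m⁻¹)
    (continuous_charFun.sub continuous_charFun).continuousAt (by simp) ?_ fun t => ?_))
  · rw [abs_inv]
    exact inv_lt_one_of_one_lt₀ hm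
  · have split : (charFun μ - charFun ν) t =
        (charFun μ - charFun ν) (m⁻¹ • t) * charFun β (m⁻¹ • t) := by
      simp only [Pi.sub_apply, sub_mul, ← hμ, ← hν, smul_inv_smul₀ hm0]
    rw [split, norm_mul]
    exact mul_le_of_le_one_right (norm_nonneg _) (norm_charFun_le_one _)

-- Grouping the digits of a base `m` expansion in pairs turns it into a base `m ^ 2` expansion.
lemma map_smul_conv_self [IsProbabilityMeasure β] [IsProbabilityMeasure μ]
    [IsProbabilityMeasure ν] (hm : 1 < |m|) (hμ : IsSelfSimilar (m ^ 2) β μ)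
    (hν : IsSelfSimilar m β ν) : μ.map (m • ·) ∗ μ = ν := by
  have : IsProbabilityMeasure (μ.map (m • ·)) :=
    Measure.isProbabilityMeasure_map (by fun_prop)
  have : IsProbabilityMeasure (β.map (m • ·)) :=
    Measure.isProbabilityMeasure_map (by fun_prop)
  rw [isSelfSimilar_iff_charFun] at hμ hν
  refine unique (m := m ^ 2) (β := β.map (m • ·) ∗ β) ?_ ?_ ?_
  · rw [abs_pow]
    exact one_lt_pow₀ hm two_ne_zero
  · rw [isSelfSimilar_iff_charFun]
    intro t
    simp only [charFun_conv, charFun_map_smul, smul_comm m (m ^ 2) t, hμ]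
    ring
  · rw [isSelfSimilar_iff_charFun]
    intro t
    simp only [charFun_conv, charFun_map_smul, pow_two, mul_smul, hν]
    ring

end IsSelfSimilar

end SelfSimilar

section UnitInterval

/-- The uniform law on `[0, 1]`. -/
def uniformUnit : Measure ℝ := volume.restrict (Icc 0 1)

instance : IsProbabilityMeasure uniformUnit := ⟨by simp [uniformUnit]⟩

lemma uniformUnit_eq_restrict_Ioc : uniformUnit = volume.restrict (Ioc 0 1) :=
  Measure.restrict_congr_set Ioc_ae_eq_Icc.symm

lemma ae_uniformUnit_mem_Ioo : ∀ᵐ u ∂uniformUnit, u ∈ Ioo (0 : ℝ) 1 := by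
  rw [uniformUnit, Measure.restrict_congr_set Ioo_ae_eq_Icc.symm]
  exact ae_restrict_mem measurableSet_Ioo

lemma volume_restrict_eq_half_smul_map (b : ℝ) {s : Set ℝ} (hs : MeasurableSet s) :
    volume.restrict s =
      (2⁻¹ : ℝ≥0∞) • (volume.restrict ((fun u => (b + u) / 2) ⁻¹' s)).map fun u => (b + u) / 2 := by
  have hmap : volume = (2⁻¹ : ℝ≥0∞) • Measure.map (fun u : ℝ => (b + u) / 2) volume := by
    have h := Real.smul_map_volume_mul_left (a := 2⁻¹) (by norm_num)
    rw [abs_of_pos (by norm_num), ENNReal.ofReal_inv_of_pos two_pos, ENNReal.ofReal_ofNat,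
      ← (measurePreserving_add_left volume b).map_eq,
      Measure.map_map (by fun_prop) (by fun_prop)] at h
    simpa only [Function.comp_def, inv_mul_eq_div, map_add_left_eq_self] using h.symm
  conv_lhs => rw [hmap, Measure.restrict_smul, Measure.restrict_map (by fun_prop) hs]

lemma uniformUnit_eq_average :
    uniformUnit = (2⁻¹ : ℝ≥0∞) • (uniformUnit.map (fun u => u / 2) +
      uniformUnit.map fun u => (1 + u) / 2) := by
  have left : (fun u : ℝ => (0 + u) / 2) ⁻¹' Ioc 0 (1 / 2) = Ioc 0 1 := by
    ext u
    grind
  have right : (fun u : ℝ => (1 + u) / 2) ⁻¹' Ioc (1 / 2) 1 = Ioc 0 1 := by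
    ext u
    grind
  rw [uniformUnit_eq_restrict_Ioc]
  conv_lhs =>
    rw [← Ioc_union_Ioc_eq_Ioc (b := (1 / 2 : ℝ)) (by norm_num) (by norm_num),
      Measure.restrict_union (by simp) measurableSet_Ioc,
      volume_restrict_eq_half_smul_map 0 measurableSet_Ioc,
      volume_restrict_eq_half_smul_map 1 measurableSet_Ioc, left, right, ← smul_add]
  simp only [zero_add]

/-- The law of a fair binary digit. -/
def fairCoin : Measure ℝ := (2⁻¹ : ℝ≥0∞) • (Measure.dirac 0 + Measure.dirac 1)

instance : IsProbabilityMeasure fairCoin :=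
  ⟨by simp [fairCoin, ENNReal.inv_two_add_inv_two]⟩

lemma conv_fairCoin (μ : Measure ℝ) [SFinite μ] :
    μ ∗ fairCoin = (2⁻¹ : ℝ≥0∞) • (μ + μ.map (1 + ·)) := by
  rw [fairCoin, Measure.conv_smul_right, Measure.conv_add, Measure.conv_dirac_zero,
    Measure.conv_dirac]
  simp only [add_comm]

lemma isSelfSimilar_fairCoin_map_uniformUnit {m : ℝ} {G : ℝ → ℝ} (hG : Measurable G)
    (left : ∀ u ∈ Ioo (0 : ℝ) 1, m * G (u / 2) = G u)
    (right : ∀ u ∈ Ioo (0 : ℝ) 1, m * G ((1 + u) / 2) = 1 + G u) :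
    IsSelfSimilar m fairCoin (uniformUnit.map G) := by
  have : IsProbabilityMeasure (uniformUnit.map G) :=
    Measure.isProbabilityMeasure_map hG.aemeasurable
  have map_half {σ H : ℝ → ℝ} (hσ : Measurable σ) (h : ∀ u ∈ Ioo (0 : ℝ) 1, m * G (σ u) = H u) :
      (uniformUnit.map σ).map (fun u => m * G u) = uniformUnit.map H := by
    rw [Measure.map_map (by fun_prop) hσ]
    exact Measure.map_congr (ae_uniformUnit_mem_Ioo.mono h)
  calc (uniformUnit.map G).map (m • ·)
      = uniformUnit.map fun u => m * G u := Measure.map_map (by fun_prop) hG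
    _ = (2⁻¹ : ℝ≥0∞) • (uniformUnit.map G + uniformUnit.map fun u => 1 + G u) := by
        conv_lhs => rw [uniformUnit_eq_average]
        rw [Measure.map_smul, Measure.map_add _ _ (by fun_prop), map_half (by fun_prop) left,
          map_half (by fun_prop) right]
    _ = uniformUnit.map G ∗ fairCoin := by
        rw [conv_fairCoin, Measure.map_map (by fun_prop) hG]
        rfl

lemma isSelfSimilar_two_uniformUnit : IsSelfSimilar 2 fairCoin uniformUnit := by
  simpa using isSelfSimilar_fairCoin_map_uniformUnit (m := 2) measurable_id
    (fun u _ => mul_div_cancel₀ u two_ne_zero) (fun u _ => mul_div_cancel₀ (1 + u) two_ne_zero)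

end UnitInterval

section DisjointSupports

variable {ι X : Type*} {f : ι → X → ℝ}

lemma summable_of_pairwise_disjoint_support
    (hdisj : Pairwise (Function.onFun Disjoint fun i => (f i).support)) (x : X) :
    Summable fun i => f i x := by
  refine summable_of_hasFiniteSupport (Set.Subsingleton.finite fun i hi j hj => ?_)
  by_contra hij
  exact disjoint_left.1 (hdisj hij) hi hj

variable [PseudoMetricSpace X] {C α : ℝ≥0}

lemma holderWith_of_dist_le {Y : Type*} [PseudoMetricSpace Y] {g : X → Y}
    (h : ∀ x y, dist (g x) (g y) ≤ C * dist x y ^ (α : ℝ)) : HolderWith C α g := by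
  intro x y
  rw [edist_nndist, edist_nndist, ← ENNReal.coe_rpow_of_nonneg _ α.coe_nonneg]
  exact_mod_cast h x y

lemma holderWith_tsum_of_pairwise_disjoint_support
    (hdisj : Pairwise (Function.onFun Disjoint fun i => (f i).support)) (hf : ∀ i x, 0 ≤ f i x)
    (hC : ∀ i, HolderWith C α (f i)) : HolderWith C α fun x => ∑' i, f i x := by
  have tsum_sub_le (x y : X) : ∑' i, f i x - ∑' i, f i y ≤ C * dist x y ^ (α : ℝ) := by
    by_cases hx : ∃ i, f i x ≠ 0
    · obtain ⟨i, hi⟩ := hx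
      have at_x : ∑' j, f j x = f i x := tsum_eq_single i fun j hj =>
        Function.notMem_support.1 (disjoint_right.1 (hdisj hj) hi)
      have at_y : f i y ≤ ∑' j, f j y :=
        (summable_of_pairwise_disjoint_support hdisj y).le_tsum i fun j _ => hf j y
      calc ∑' j, f j x - ∑' j, f j y ≤ f i x - f i y := by linarith
        _ ≤ dist (f i x) (f i y) := le_abs_self _
        _ ≤ _ := (hC i).dist_le x y
    · push Not at hx
      simp only [hx, tsum_zero, zero_sub]
      have : 0 ≤ ∑' i, f i y := tsum_nonneg fun i => hf i y
      have : 0 ≤ C * dist x y ^ (α : ℝ) := by positivity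
      linarith
  refine holderWith_of_dist_le fun x y => abs_sub_le_iff.2 ⟨tsum_sub_le x y, ?_⟩
  rw [dist_comm]
  exact tsum_sub_le y x

end DisjointSupports

section Bump

/-- The parabola `6 p (1 - p)`, of mass `1` on `[0, 1]`, extended by `0`: the argument is clamped
to `p ∈ [0, 1]`. -/
def parabolicBump (y : ℝ) : ℝ :=
  6 * projIcc 0 1 zero_le_one y * (1 - projIcc 0 1 zero_le_one y)

lemma parabolicBump_nonneg (y : ℝ) : 0 ≤ parabolicBump y := by
  obtain ⟨h0, h1⟩ := (projIcc 0 1 zero_le_one y).2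
  exact mul_nonneg (by positivity) (sub_nonneg.2 h1)

lemma support_parabolicBump_subset : parabolicBump.support ⊆ Ioo 0 1 := by
  intro y hy
  contrapose! hy
  rw [Function.notMem_support, parabolicBump]
  rcases le_or_gt y 0 with h | h
  · simp [projIcc_of_le_left _ h]
  · simp [projIcc_of_right_le _ (not_lt.1 fun h' => hy ⟨h, h'⟩)]

lemma parabolicBump_of_mem_Icc {y : ℝ} (hy : y ∈ Icc (0 : ℝ) 1) :
    parabolicBump y = 6 * y * (1 - y) := by
  simp [parabolicBump, projIcc_of_mem _ hy]

lemma holderWith_parabolicBump {α : ℝ≥0} (hα : α ≤ 1) : HolderWith 6 α parabolicBump := by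
  refine holderWith_of_dist_le fun x y => ?_
  have clamp_dist : dist (projIcc (0 : ℝ) 1 zero_le_one x) (projIcc 0 1 zero_le_one y) ≤
      dist x y := by
    simpa using (LipschitzWith.projIcc zero_le_one).dist_le_mul x y
  unfold parabolicBump
  generalize projIcc (0 : ℝ) 1 zero_le_one x = p at *
  generalize projIcc (0 : ℝ) 1 zero_le_one y = q at *
  obtain ⟨p, hp0, hp1⟩ := p
  obtain ⟨q, hq0, hq1⟩ := q
  rw [Subtype.dist_eq, Real.dist_eq] at clamp_dist
  calc dist (6 * p * (1 - p)) (6 * q * (1 - q)) = 6 * (|p - q| * |1 - p - q|) := by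
        rw [Real.dist_eq, ← abs_mul, show 6 * p * (1 - p) - 6 * q * (1 - q) =
          6 * ((p - q) * (1 - p - q)) by ring, abs_mul, abs_of_pos (by norm_num)]
    _ ≤ 6 * |p - q| := by
        gcongr
        exact mul_le_of_le_one_right (abs_nonneg _) (abs_le.2 ⟨by linarith, by linarith⟩)
    _ ≤ 6 * |p - q| ^ (α : ℝ) := by
        gcongr
        exact Real.self_le_rpow_of_le_one (abs_nonneg _) (abs_le.2 ⟨by linarith, by linarith⟩)
          (by exact_mod_cast hα)
    _ ≤ 6 * dist x y ^ (α : ℝ) := by gcongr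

lemma integral_parabolicBump : ∫ y, parabolicBump y = 1 := by
  have restrict : ∫ y in (0 : ℝ)..1, parabolicBump y = ∫ y in (0 : ℝ)..1, (6 * y - 6 * y ^ 2) := by
    refine intervalIntegral.integral_congr fun y hy => ?_
    rw [uIcc_of_le zero_le_one] at hy
    rw [parabolicBump_of_mem_Icc hy]
    ring
  rw [← intervalIntegral.integral_eq_integral_of_support_subset
    (support_parabolicBump_subset.trans Ioo_subset_Ioc_self), restrict,
    intervalIntegral.integral_sub (Continuous.intervalIntegrable (by fun_prop) _ _)
    (Continuous.intervalIntegrable (by fun_prop) _ _), intervalIntegral.integral_const_mul,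
    intervalIntegral.integral_const_mul, integral_id, integral_pow]
  norm_num

/-- A bump of total mass `J` supported on `[a, a + w]`. -/
def bump (a w J x : ℝ) : ℝ := J / w * parabolicBump ((x - a) / w)

variable {a w J : ℝ}

lemma bump_nonneg (hw : 0 ≤ w) (hJ : 0 ≤ J) (x : ℝ) : 0 ≤ bump a w J x :=
  mul_nonneg (div_nonneg hJ hw) (parabolicBump_nonneg _)

lemma support_bump_subset (hw : 0 < w) : (bump a w J).support ⊆ Ioo a (a + w) := by
  intro x hx
  obtain ⟨h0, h1⟩ := support_parabolicBump_subset (right_ne_zero_of_mul hx)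
  rw [div_pos_iff_of_pos_right hw] at h0
  rw [div_lt_one hw] at h1
  exact ⟨by linarith, by linarith⟩

lemma holderWith_bump {H α : ℝ≥0} (hα : α ≤ 1) (hw : 0 < w) (hJ : 0 ≤ J)
    (hH : J ≤ H * w ^ (1 + α : ℝ)) : HolderWith (6 * H) α (bump a w J) := by
  refine holderWith_of_dist_le fun x y => ?_
  have rescale : dist ((x - a) / w) ((y - a) / w) = dist x y / w := by
    rw [Real.dist_eq, Real.dist_eq, ← abs_of_pos hw, ← abs_div, abs_of_pos hw]
    ring_nf
  calc dist (bump a w J x) (bump a w J y)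
      = J / w * dist (parabolicBump ((x - a) / w)) (parabolicBump ((y - a) / w)) := by
        rw [bump, bump, Real.dist_eq, Real.dist_eq, ← mul_sub, abs_mul,
          abs_of_nonneg (div_nonneg hJ hw.le)]
    _ ≤ J / w * (6 * (dist x y / w) ^ (α : ℝ)) := by
        gcongr
        exact rescale ▸ (holderWith_parabolicBump hα).dist_le _ _
    _ = 6 * (J / w ^ (1 + α : ℝ)) * dist x y ^ (α : ℝ) := by
        rw [Real.div_rpow dist_nonneg hw.le, Real.rpow_add hw, Real.rpow_one]
        field_simp
    _ ≤ (6 * H : ℝ≥0) * dist x y ^ (α : ℝ) := by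
        push_cast
        gcongr
        exact (div_le_iff₀ (by positivity)).2 hH

lemma continuous_bump : Continuous (bump a w J) := by
  have := (holderWith_parabolicBump le_rfl).continuous one_pos
  unfold bump
  fun_prop

lemma integrable_bump (hw : 0 < w) : Integrable (bump a w J) :=
  continuous_bump.integrable_of_hasCompactSupport <|
    .of_support_subset_isCompact isCompact_Icc ((support_bump_subset hw).trans Ioo_subset_Icc_self)

lemma integral_bump (hw : 0 < w) : ∫ x, bump a w J x = J := by
  simp only [bump]
  rw [integral_const_mul, integral_sub_right_eq_self (fun x => parabolicBump (x / w)) a,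
    Measure.integral_comp_div, integral_parabolicBump, abs_of_pos hw,
    smul_eq_mul, mul_one, div_mul_cancel₀ _ hw.ne']

end Bump

section JumpSum

/-- The pure jump function with a jump of height `w i` just after each point `q i`. -/
def jumpSum {ι : Type*} (q w : ι → ℝ) (t : ℝ) : ℝ := ∑' i, if q i < t then w i else 0

variable {ι : Type*} {q w : ι → ℝ} {s t : ℝ}

lemma summable_ite_lt (hw : Summable w) (t : ℝ) : Summable fun i => if q i < t then w i else 0 :=
  hw.indicator {i | q i < t}

lemma monotone_jumpSum (hw : Summable w) (hw0 : ∀ i, 0 ≤ w i) : Monotone (jumpSum q w) := by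
  intro s t hst
  refine (summable_ite_lt hw s).tsum_le_tsum (fun i => ?_) (summable_ite_lt hw t)
  have := hw0 i
  split_ifs <;> grind

lemma jumpSum_add_le_jumpSum (hw : Summable w) (hw0 : ∀ i, 0 ≤ w i) {i : ι} (hi : q i < t) :
    jumpSum q w (q i) + w i ≤ jumpSum q w t := by
  classical
  have single : HasSum (fun j => if j = i then w i else 0) (w i) := hasSum_ite_eq i (w i)
  refine hasSum_le (fun j => ?_) ((summable_ite_lt hw (q i)).hasSum.add single)
    (summable_ite_lt hw t).hasSum
  have := hw0 j
  grind

lemma jumpSum_eq_zero (h : ∀ i, t ≤ q i) : jumpSum q w t = 0 := by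
  simp [jumpSum, fun i => not_lt.2 (h i)]

lemma jumpSum_eq_tsum (h : ∀ i, q i < t) : jumpSum q w t = ∑' i, w i := by
  simp [jumpSum, h]

end JumpSum

lemma map_restrict_eq_smul_restrict_of_antilipschitz {K : ℝ≥0} {s : ℝ → ℝ} {A C : Set ℝ}
    (hs : AntilipschitzWith K s) (hmeas : Measurable s) (hsC : MapsTo s A C) (hC : volume C ≠ ∞)
    (hvol : K * volume C ≤ volume A) :
    (volume.restrict A).map s = (K : ℝ≥0∞) • volume.restrict C := by
  have : IsFiniteMeasure (volume.restrict C) := ⟨by simpa using hC.lt_top⟩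
  have map_le : (volume.restrict A).map s ≤ (K : ℝ≥0∞) • volume.restrict C := by
    refine Measure.le_iff.2 fun B hB => ?_
    calc (volume.restrict A).map s B = volume (s ⁻¹' B ∩ A) := by
          rw [Measure.map_apply hmeas hB, Measure.restrict_apply (hmeas hB)]
      _ ≤ volume (s ⁻¹' (B ∩ C)) := by
          gcongr
          exact fun t ht => ⟨ht.1, hsC ht.2⟩
      _ ≤ K * volume (B ∩ C) := by
          simpa [hausdorffMeasure_real] using hs.hausdorffMeasure_preimage_le zero_le_one (B ∩ C)
      _ = ((K : ℝ≥0∞) • volume.restrict C) B := by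
          rw [Measure.smul_apply, Measure.restrict_apply hB, smul_eq_mul]
  have : IsFiniteMeasure ((volume.restrict A).map s) :=
    isFiniteMeasure_of_le (K • volume.restrict C) map_le
  refine Measure.eq_of_le_of_measure_univ_eq map_le (le_antisymm (map_le _) ?_)
  simpa [Measure.map_apply hmeas] using hvol

section GapSystem

/-- Data for a fat Cantor set: the `i`-th gap has length `width i` and is inserted at the point
`pos i` of the unit interval, which is compressed beforehand to make room for all the gaps. -/
structure GapSystem (ι : Type*) where
  pos : ι → ℝ
  width : ι → ℝ
  pos_injective : Function.Injective pos
  pos_mem_Ioo : ∀ i, pos i ∈ Ioo (0 : ℝ) 1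
  width_pos : ∀ i, 0 < width i
  summable_width : Summable width
  tsum_width_lt_one : ∑' i, width i < 1

namespace GapSystem

variable {ι : Type*} (S : GapSystem ι)

lemma countable (S : GapSystem ι) : Countable ι := by
  have := S.summable_width.countable_support
  rwa [Function.support_eq_univ fun i => (S.width_pos i).ne', countable_univ_iff] at this

/-- The length that remains once the gaps are removed from `[0, 1]`. -/
def size : ℝ := 1 - ∑' i, S.width i

lemma size_pos : 0 < S.size := sub_pos.2 S.tsum_width_lt_one

/-- The map that inserts the gaps: it compresses the unit interval by the factor `size` and jumps
by `width i` after `pos i`. -/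
def stretch (t : ℝ) : ℝ := S.size * t + jumpSum S.pos S.width t

lemma size_mul_sub_le {s t : ℝ} (hst : s ≤ t) :
    S.size * (t - s) ≤ S.stretch t - S.stretch s := by
  have := monotone_jumpSum (q := S.pos) S.summable_width (fun i => (S.width_pos i).le) hst
  unfold stretch
  linarith

lemma monotone_stretch : Monotone S.stretch := fun _ _ hst =>
  sub_nonneg.1 ((mul_nonneg S.size_pos.le (sub_nonneg.2 hst)).trans (S.size_mul_sub_le hst))

lemma antilipschitzWith_stretch : AntilipschitzWith S.size⁻¹.toNNReal S.stretch := by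
  refine AntilipschitzWith.of_le_mul_dist fun s t => ?_
  wlog hst : s ≤ t generalizing s t
  · rw [dist_comm s, dist_comm (S.stretch s)]
    exact this t s (le_of_not_ge hst)
  rw [Real.coe_toNNReal _ (inv_nonneg.2 S.size_pos.le), ← div_eq_inv_mul, le_div_iff₀' S.size_pos,
    dist_comm s, dist_comm (S.stretch s), Real.dist_eq, Real.dist_eq,
    abs_of_nonneg (sub_nonneg.2 hst), abs_of_nonneg (sub_nonneg.2 (S.monotone_stretch hst))]
  exact S.size_mul_sub_le hst

lemma stretch_zero : S.stretch 0 = 0 := by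
  simp [stretch, jumpSum_eq_zero fun i => (S.pos_mem_Ioo i).1.le]

lemma stretch_one : S.stretch 1 = 1 := by
  simp [stretch, jumpSum_eq_tsum fun i => (S.pos_mem_Ioo i).2, size]

/-- The left endpoint of the `i`-th gap. -/
def left (i : ι) : ℝ := S.stretch (S.pos i)

lemma left_add_width_lt {i : ι} {t : ℝ} (hi : S.pos i < t) :
    S.left i + S.width i < S.stretch t := by
  have := jumpSum_add_le_jumpSum S.summable_width (fun i => (S.width_pos i).le) hi
  have := mul_lt_mul_of_pos_left hi S.size_pos
  unfold left stretch
  linarith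

/-- The `i`-th gap. -/
def gap (i : ι) : Set ℝ := Ioo (S.left i) (S.left i + S.width i)

lemma gap_subset (i : ι) : S.gap i ⊆ Icc 0 1 := by
  refine Ioo_subset_Icc_self.trans (Icc_subset_Icc ?_ ?_)
  · exact S.stretch_zero ▸ S.monotone_stretch (S.pos_mem_Ioo i).1.le
  · exact S.stretch_one ▸ (S.left_add_width_lt (S.pos_mem_Ioo i).2).le

lemma pairwise_disjoint_gap : Pairwise (Function.onFun Disjoint S.gap) := by
  intro i j hij
  wlog h : S.pos i < S.pos j generalizing i j
  · exact (this hij.symm ((S.pos_injective.ne hij).lt_or_gt.resolve_left h)).symm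
  · exact disjoint_left.2 fun x hi hj => (hi.2.trans (S.left_add_width_lt h)).not_gt hj.1

/-- The fat Cantor set: the unit interval without the gaps. -/
def cantorSet : Set ℝ := Icc 0 1 \ ⋃ i, S.gap i

lemma cantorSet_subset : S.cantorSet ⊆ Icc 0 1 := sdiff_subset

lemma isCompact_cantorSet : IsCompact S.cantorSet :=
  isCompact_Icc.diff (isOpen_iUnion fun _ => isOpen_Ioo)

lemma volume_cantorSet : volume S.cantorSet = ENNReal.ofReal S.size := by
  have := S.countable
  have width_nonneg (i : ι) : 0 ≤ S.width i := (S.width_pos i).le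
  have gaps : volume (⋃ i, S.gap i) = ENNReal.ofReal (∑' i, S.width i) := by
    rw [measure_iUnion S.pairwise_disjoint_gap fun i => measurableSet_Ioo,
      ENNReal.ofReal_tsum_of_nonneg width_nonneg S.summable_width]
    simp [gap]
  rw [cantorSet, measure_sdiff (iUnion_subset S.gap_subset)
    (MeasurableSet.iUnion fun i => measurableSet_Ioo).nullMeasurableSet (by simp [gaps]), gaps,
    Real.volume_Icc, ← ENNReal.ofReal_sub _ (tsum_nonneg width_nonneg), sub_zero, size]

lemma mapsTo_stretch : MapsTo S.stretch (Icc 0 1) S.cantorSet := by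
  intro t ht
  refine ⟨⟨S.stretch_zero ▸ S.monotone_stretch ht.1, S.stretch_one ▸ S.monotone_stretch ht.2⟩, ?_⟩
  simp only [mem_iUnion, not_exists]
  intro i hi
  rcases le_or_gt t (S.pos i) with h | h
  · exact (S.monotone_stretch h).not_gt hi.1
  · exact (S.left_add_width_lt h).not_gt hi.2

lemma restrict_cantorSet :
    volume.restrict S.cantorSet = ENNReal.ofReal S.size • uniformUnit.map S.stretch := by
  have cancel : ENNReal.ofReal S.size * ENNReal.ofReal S.size⁻¹ = 1 := by
    rw [← ENNReal.ofReal_mul S.size_pos.le, mul_inv_cancel₀ S.size_pos.ne', ENNReal.ofReal_one]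
  rw [uniformUnit, map_restrict_eq_smul_restrict_of_antilipschitz S.antilipschitzWith_stretch
    S.monotone_stretch.measurable S.mapsTo_stretch (by simp [volume_cantorSet]), smul_smul]
  · exact (congrArg (· • volume.restrict S.cantorSet) cancel).trans (one_smul _ _) |>.symm
  · rw [volume_cantorSet, mul_comm, Real.volume_Icc, sub_zero, ENNReal.ofReal_one]
    exact cancel.le

/-- The derivative of the staircase: a bump of mass `J i` on the `i`-th gap. -/
def density (J : ι → ℝ) (x : ℝ) : ℝ := ∑' i, bump (S.left i) (S.width i) (J i) x

variable {S} {J : ι → ℝ}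

lemma density_of_mem_cantorSet {x : ℝ} (hx : x ∈ S.cantorSet) : S.density J x = 0 := by
  refine (tsum_congr fun i => ?_).trans tsum_zero
  by_contra hi
  exact hx.2 (mem_iUnion.2 ⟨i, support_bump_subset (S.width_pos i) hi⟩)

lemma holderWith_density {H α : ℝ≥0} (hα : α ≤ 1) (hJ : ∀ i, 0 ≤ J i)
    (hH : ∀ i, J i ≤ H * S.width i ^ (1 + α : ℝ)) : HolderWith (6 * H) α (S.density J) :=
  holderWith_tsum_of_pairwise_disjoint_support
    (fun _ _ hij => (S.pairwise_disjoint_gap hij).mono (support_bump_subset (S.width_pos _))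
      (support_bump_subset (S.width_pos _)))
    (fun i => bump_nonneg (S.width_pos i).le (hJ i))
    fun i => holderWith_bump hα (S.width_pos i) (hJ i) (hH i)

/-- The primitive of `density`, which climbs by `J i` across the `i`-th gap and is critical on the
Cantor set. -/
def staircase (S : GapSystem ι) (J : ι → ℝ) (x : ℝ) : ℝ := ∫ y in (0 : ℝ)..x, S.density J y

lemma hasDerivAt_staircase (hcont : Continuous (S.density J)) (x : ℝ) :
    HasDerivAt (S.staircase J) (S.density J x) x :=
  hcont.integral_hasStrictDerivAt 0 x |>.hasDerivAt

lemma setIntegral_bump_stretch (i : ι) (t : ℝ) :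
    ∫ x in Ioc 0 (S.stretch t), bump (S.left i) (S.width i) (J i) x =
      if S.pos i < t then J i else 0 := by
  have support : (bump (S.left i) (S.width i) (J i)).support ⊆ S.gap i :=
    support_bump_subset (S.width_pos i)
  split_ifs with h
  · rw [setIntegral_eq_integral_of_forall_compl_eq_zero, integral_bump (S.width_pos i)]
    intro x hx
    by_contra hbump
    have hgap := support hbump
    have : 0 ≤ S.left i := S.stretch_zero ▸ S.monotone_stretch (S.pos_mem_Ioo i).1.le
    exact hx ⟨this.trans_lt hgap.1, (hgap.2.trans (S.left_add_width_lt h)).le⟩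
  · refine setIntegral_eq_zero_of_forall_eq_zero fun x hx => ?_
    by_contra hbump
    exact (hx.2.trans (S.monotone_stretch (not_lt.1 h))).not_gt (support hbump).1

lemma staircase_stretch (hJ : ∀ i, 0 ≤ J i) (hJs : Summable J) {t : ℝ} (ht : 0 ≤ t) :
    S.staircase J (S.stretch t) = jumpSum S.pos J t := by
  have := S.countable
  have norm_bump (i : ι) (x : ℝ) : ‖bump (S.left i) (S.width i) (J i) x‖ =
      bump (S.left i) (S.width i) (J i) x :=
    Real.norm_of_nonneg (bump_nonneg (S.width_pos i).le (hJ i) x)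
  unfold staircase density
  rw [intervalIntegral.integral_of_le (S.stretch_zero ▸ S.monotone_stretch ht),
    ← integral_tsum_of_summable_integral_norm
      (fun i => (integrable_bump (S.width_pos i)).integrableOn)]
  · simp only [setIntegral_bump_stretch, jumpSum]
  · simpa only [norm_bump, setIntegral_bump_stretch] using summable_ite_lt hJs t

lemma map_staircase_restrict_cantorSet (hJ : ∀ i, 0 ≤ J i) (hJs : Summable J)
    (hcont : Continuous (S.density J)) :
    (volume.restrict S.cantorSet).map (S.staircase J) =
      ENNReal.ofReal S.size • uniformUnit.map (jumpSum S.pos J) := by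
  have hmeas : Measurable (S.staircase J) :=
    (continuous_iff_continuousAt.2 fun x => (hasDerivAt_staircase hcont x).continuousAt).measurable
  rw [restrict_cantorSet, Measure.map_smul, Measure.map_map hmeas S.monotone_stretch.measurable]
  exact congrArg _ (Measure.map_congr (ae_uniformUnit_mem_Ioo.mono fun t ht =>
    staircase_stretch hJ hJs ht.1.le))

end GapSystem

end GapSystem

section Words

lemma hasSum_list_cons {A M : Type*} [Fintype A] [AddCommMonoid M] [TopologicalSpace M]
    [ContinuousAdd M] {f : List A → M} {s : A → M} (h : ∀ a, HasSum (fun l => f (a :: l)) (s a)) :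
    HasSum f (f [] + ∑ a, s a) := by
  classical
  have extend_cons (a : A) :
      HasSum (Function.extend (List.cons a) (fun l => f (a :: l)) 0) (s a) :=
    (hasSum_extend_zero List.cons_injective).2 (h a)
  convert (hasSum_ite_eq [] (f [])).add (hasSum_sum fun a (_ : a ∈ Finset.univ) => extend_cons a)
    using 2 with l
  have extend_of_ne {a : A} {l : List A} (hl : ∀ l', a :: l' ≠ l) :
      Function.extend (List.cons a) (fun l => f (a :: l)) 0 l = 0 :=
    Function.extend_apply' _ _ _ fun ⟨l', h'⟩ => hl l' h'
  cases l with
  | nil => simp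
  | cons b l =>
    rw [if_neg (List.cons_ne_nil b l), zero_add, Finset.sum_eq_single b
      (fun a _ hab => extend_of_ne fun l' h' => hab (List.cons.inj h').1) (by simp),
      List.cons_injective.extend_apply]

lemma hasSum_comp_length {A : Type*} [Fintype A] {F : ℕ → ℝ} {s : ℝ} (hF : ∀ n, 0 ≤ F n)
    (hs : HasSum (fun n => Fintype.card A ^ n * F n) s) :
    HasSum (fun l : List A => F l.length) s := by
  rw [← (List.equivSigmaTuple (α := A)).symm.hasSum_iff]
  have fiber (n : ℕ) : HasSum (fun _ : Fin n → A => F n) (Fintype.card A ^ n * F n) := by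
    simpa using hasSum_fintype fun _ : Fin n → A => F n
  have summable : Summable fun x : Σ n, (Fin n → A) => F x.1 :=
    (summable_sigma_of_nonneg fun x => hF x.1).2
      ⟨fun n => (fiber n).summable, by simpa only [(fiber _).tsum_eq] using hs.summable⟩
  simpa [Function.comp_def] using HasSum.sigma_of_hasSum hs fiber summable

/-- The dyadic point of `(0, 1)` with binary expansion `0.b₁…bₙ1`, indexed by the word
`[b₁, …, bₙ]`. -/
def dyadicPoint : List Bool → ℝ
  | [] => 1 / 2
  | b :: l => (b.toNat + dyadicPoint l) / 2

lemma dyadicPoint_false (l : List Bool) : dyadicPoint (false :: l) = dyadicPoint l / 2 := by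
  simp [dyadicPoint]

lemma dyadicPoint_true (l : List Bool) : dyadicPoint (true :: l) = (1 + dyadicPoint l) / 2 := by
  simp [dyadicPoint]

lemma dyadicPoint_mem_Ioo (l : List Bool) : dyadicPoint l ∈ Ioo (0 : ℝ) 1 := by
  induction l with
  | nil => norm_num [dyadicPoint]
  | cons b l ih => cases b <;> grind [dyadicPoint_false, dyadicPoint_true]

lemma dyadicPoint_injective : Function.Injective dyadicPoint := by
  intro l
  induction l with
  | nil =>
    rintro (_ | ⟨_ | _, m⟩) h
    · rfl
    all_goals grind [dyadicPoint, dyadicPoint_false, dyadicPoint_true, dyadicPoint_mem_Ioo m]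
  | cons b l ih =>
    have := dyadicPoint_mem_Ioo l
    rintro (_ | ⟨b', m⟩) h
    · cases b <;> grind [dyadicPoint, dyadicPoint_false, dyadicPoint_true]
    · cases b <;> cases b' <;>
        grind [dyadicPoint_false, dyadicPoint_true, dyadicPoint_mem_Ioo m]

/-- The height of the jump of the target law at `dyadicPoint l`. The total mass is
`1 / 3 = ∑_{k ≥ 1} 4⁻ᵏ`, the range of the digit series in base `4`, and its middle jump is
`4⁻¹ - ∑_{k ≥ 2} 4⁻ᵏ = 1 / 6`. -/
def wordMass (l : List Bool) : ℝ := 1 / 6 * (1 / 4) ^ l.length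

lemma wordMass_nonneg (l : List Bool) : 0 ≤ wordMass l := by
  unfold wordMass
  positivity

lemma wordMass_cons (b : Bool) (l : List Bool) : wordMass (b :: l) = wordMass l / 4 := by
  rw [wordMass, wordMass, List.length_cons, pow_succ]
  ring

lemma hasSum_wordMass : HasSum wordMass (1 / 3) := by
  refine hasSum_comp_length (F := fun n => 1 / 6 * (1 / 4) ^ n) (fun n => by positivity) ?_
  rw [show (1 / 3 : ℝ) = 1 / 6 * (1 - 1 / 2)⁻¹ by norm_num]
  refine ((hasSum_geometric_of_lt_one (by norm_num) (by norm_num)).mul_left (1 / 6)).congr_fun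
    fun n => ?_
  rw [Fintype.card_bool, mul_left_comm, Nat.cast_ofNat, ← mul_pow]
  norm_num

/-- The length of the gap at `dyadicPoint l`. The polynomial factor makes the lengths summable,
while keeping the masses `4⁻ⁿ` of smaller order than any power of them of exponent below `2`. -/
def wordWidth (l : List Bool) : ℝ := (1 / 2) ^ l.length / (4 * (l.length + 1) ^ 2)

lemma wordWidth_pos (l : List Bool) : 0 < wordWidth l := by
  unfold wordWidth
  positivity

lemma hasSum_wordWidth : HasSum wordWidth (Real.pi ^ 2 / 24) := by
  refine hasSum_comp_length (F := fun n => (1 / 2) ^ n / (4 * (n + 1) ^ 2))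
    (fun n => by positivity) ?_
  have basel : HasSum (fun n : ℕ => 1 / ((n + 1 : ℕ) : ℝ) ^ 2) (Real.pi ^ 2 / 6) := by
    simpa using (hasSum_nat_add_iff' 1).2 hasSum_zeta_two
  rw [show Real.pi ^ 2 / 24 = 1 / 4 * (Real.pi ^ 2 / 6) by ring]
  refine (basel.mul_left (1 / 4)).congr_fun fun n => ?_
  rw [Fintype.card_bool, Nat.cast_ofNat, ← mul_div_assoc, ← mul_pow]
  norm_num
  ring

lemma exists_pow_mul_le {ρ : ℝ} (h0 : 0 < ρ) (h1 : ρ < 1) (k : ℕ) :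
    ∃ B : ℝ≥0, ∀ n : ℕ, ρ ^ n * (n + 1) ^ k ≤ B := by
  obtain ⟨B, hB⟩ := (tendsto_pow_const_mul_const_pow_of_lt_one k h0.le h1).bddAbove_range
  refine ⟨(B / ρ).toNNReal, fun n => le_trans ?_ (Real.le_coe_toNNReal _)⟩
  rw [le_div_iff₀ h0]
  have := hB ⟨n + 1, rfl⟩
  push_cast at this
  rwa [pow_succ, mul_comm, mul_right_comm] at this

lemma exists_wordMass_le {α : ℝ} (hα : α < 1) :
    ∃ H : ℝ≥0, ∀ l, wordMass l ≤ H * wordWidth l ^ (1 + α) := by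
  set θ : ℝ := (1 / 2) ^ (1 + α)
  have hθ : 0 < θ := by positivity
  have quarter_lt : 1 / 4 < θ := calc
    (1 / 4 : ℝ) = (1 / 2) ^ (2 : ℝ) := by norm_num
    _ < θ := Real.rpow_lt_rpow_of_exponent_gt (by norm_num) (by norm_num) (by linarith)
  obtain ⟨B, hB⟩ := exists_pow_mul_le (div_pos (by norm_num) hθ) ((div_lt_one hθ).2 quarter_lt) 4
  refine ⟨8 / 3 * B, fun l => ?_⟩
  set n := l.length
  set P : ℝ := 4 * (n + 1) ^ 2
  have one_le : 1 ≤ P := by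
    have : (0 : ℝ) ≤ n := n.cast_nonneg
    nlinarith
  have width_rpow : wordWidth l ^ (1 + α) = θ ^ n / P ^ (1 + α) := by
    rw [wordWidth, Real.div_rpow (by positivity) (by positivity),
      ← Real.rpow_pow_comm (by norm_num)]
  have polynomial : P ^ (1 + α) ≤ P ^ 2 := by
    rw [← Real.rpow_two]
    exact Real.rpow_le_rpow_of_exponent_le one_le (by linarith)
  rw [width_rpow, ← mul_div_assoc, le_div_iff₀ (by positivity)]
  calc wordMass l * P ^ (1 + α) ≤ 1 / 6 * (1 / 4) ^ n * P ^ 2 := by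
        rw [wordMass]
        gcongr
    _ = 8 / 3 * ((1 / 4 / θ) ^ n * (n + 1) ^ 4) * θ ^ n := by
        rw [div_pow _ θ]
        field_simp
        ring
    _ ≤ (8 / 3 * B : ℝ≥0) * θ ^ n := by
        push_cast
        gcongr
        exact hB n

/-- The gaps of the Cantor set of the construction. -/
def dyadicGaps : GapSystem (List Bool) where
  pos := dyadicPoint
  width := wordWidth
  pos_injective := dyadicPoint_injective
  pos_mem_Ioo := dyadicPoint_mem_Ioo
  width_pos := wordWidth_pos
  summable_width := hasSum_wordWidth.summable
  tsum_width_lt_one := by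
    rw [hasSum_wordWidth.tsum_eq]
    nlinarith [Real.pi_pos, Real.pi_lt_four]

/-- A quantile function of the law of `∑_{k ≥ 1} 4⁻ᵏ ε_k`, where the `ε_k` are fair digits. -/
def quantile : ℝ → ℝ := jumpSum dyadicPoint wordMass

lemma measurable_quantile : Measurable quantile :=
  (monotone_jumpSum hasSum_wordMass.summable wordMass_nonneg).measurable

lemma four_mul_quantile (t : ℝ) : 4 * quantile t =
    (if 1 / 2 < t then 2 / 3 else 0) + (quantile (2 * t) + quantile (2 * t - 1)) := by
  have branch (b : Bool) : HasSum
      (fun l => if dyadicPoint (b :: l) < t then wordMass (b :: l) else 0)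
      (quantile (2 * t - b.toNat) / 4) := by
    refine ((summable_ite_lt hasSum_wordMass.summable (2 * t - b.toNat)).hasSum.div_const
      4).congr_fun fun l => ?_
    rw [ite_div, zero_div, wordMass_cons]
    refine if_congr ?_ rfl rfl
    rw [dyadicPoint, div_lt_iff₀ two_pos, lt_sub_iff_add_lt', mul_comm]
  have split : quantile t = (if 1 / 2 < t then 1 / 6 else 0) +
      (quantile (2 * t - 1) / 4 + quantile (2 * t) / 4) := by
    refine (hasSum_list_cons
      (f := fun l => if dyadicPoint l < t then wordMass l else 0) branch).tsum_eq.trans ?_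
    simp [dyadicPoint, wordMass]
  rw [split]
  split_ifs <;> ring

lemma quantile_left {u : ℝ} (hu : u ∈ Ioo (0 : ℝ) 1) : 4 * quantile (u / 2) = quantile u := by
  have zero : quantile (2 * (u / 2) - 1) = 0 :=
    jumpSum_eq_zero fun l => by linarith [hu.2, (dyadicPoint_mem_Ioo l).1]
  rw [four_mul_quantile, if_neg (by linarith [hu.2]), zero, mul_div_cancel₀ u two_ne_zero]
  ring

lemma quantile_right {u : ℝ} (hu : u ∈ Ioo (0 : ℝ) 1) :
    4 * quantile ((1 + u) / 2) = 1 + quantile u := by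
  have full : quantile (2 * ((1 + u) / 2)) = 1 / 3 :=
    (jumpSum_eq_tsum fun l => by linarith [hu.1, (dyadicPoint_mem_Ioo l).2]).trans
      hasSum_wordMass.tsum_eq
  rw [four_mul_quantile, if_pos (by linarith [hu.1]), full, mul_div_cancel₀ (1 + u) two_ne_zero]
  ring_nf

end Words

section Profile

lemma map_two_mul_quantile_conv :
    (uniformUnit.map quantile).map (2 * ·) ∗ uniformUnit.map quantile = uniformUnit := by
  have : IsProbabilityMeasure (uniformUnit.map quantile) :=
    Measure.isProbabilityMeasure_map measurable_quantile.aemeasurable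
  refine IsSelfSimilar.map_smul_conv_self (m := 2) (by norm_num) ?_ isSelfSimilar_two_uniformUnit
  rw [show (2 : ℝ) ^ 2 = 4 by norm_num]
  exact isSelfSimilar_fairCoin_map_uniformUnit measurable_quantile (fun _ => quantile_left)
    fun _ => quantile_right

/-- The one-dimensional function of the construction: it climbs by `wordMass l` across the gap of
the word `l`, and is critical on the Cantor set `dyadicGaps.cantorSet`. -/
def profile : ℝ → ℝ := dyadicGaps.staircase wordMass

/-- The derivative of `profile`. -/
def profileDeriv : ℝ → ℝ := dyadicGaps.density wordMass

lemma profileDeriv_of_mem_cantorSet {x : ℝ} (hx : x ∈ dyadicGaps.cantorSet) :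
    profileDeriv x = 0 :=
  GapSystem.density_of_mem_cantorSet hx

lemma exists_holderWith_profileDeriv {α : ℝ≥0} (hα : α < 1) :
    ∃ C, HolderWith C α profileDeriv := by
  obtain ⟨H, hH⟩ := exists_wordMass_le (α := α) (by exact_mod_cast hα)
  exact ⟨6 * H, GapSystem.holderWith_density hα.le wordMass_nonneg hH⟩

lemma continuous_profileDeriv : Continuous profileDeriv := by
  obtain ⟨C, hC⟩ := exists_holderWith_profileDeriv (α := 1 / 2) (by norm_num)
  exact hC.continuous (by norm_num)

lemma hasDerivAt_profile (x : ℝ) : HasDerivAt profile (profileDeriv x) x :=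
  GapSystem.hasDerivAt_staircase continuous_profileDeriv x

lemma measurable_profile : Measurable profile :=
  (continuous_iff_continuousAt.2 fun x => (hasDerivAt_profile x).continuousAt).measurable

lemma map_two_mul_profile_conv :
    (volume.restrict dyadicGaps.cantorSet).map (fun x => 2 * profile x) ∗
      (volume.restrict dyadicGaps.cantorSet).map profile =
        ENNReal.ofReal (dyadicGaps.size * dyadicGaps.size) • uniformUnit := by
  have law : (volume.restrict dyadicGaps.cantorSet).map profile =
      ENNReal.ofReal dyadicGaps.size • uniformUnit.map quantile :=
    GapSystem.map_staircase_restrict_cantorSet wordMass_nonneg hasSum_wordMass.summable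
      continuous_profileDeriv
  rw [← Function.comp_def, ← Measure.map_map (by fun_prop) measurable_profile, law,
    Measure.map_smul, Measure.conv_smul_left, Measure.conv_smul_right, map_two_mul_quantile_conv,
    smul_smul, ENNReal.ofReal_mul dyadicGaps.size_pos.le]

end Profile

section Plane

/-- The product `A × B`, as a subset of the Euclidean plane. -/
def coordProd (A B : Set ℝ) : Set (EuclideanSpace ℝ (Fin 2)) := {x | x 0 ∈ A ∧ x 1 ∈ B}

variable {A B : Set ℝ}

lemma unitSquare_eq_coordProd : unitSquare = coordProd (Icc 0 1) (Icc 0 1) :=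
  Set.ext fun _ => Fin.forall_fin_two

lemma isCompact_coordProd (hA : IsCompact A) (hB : IsCompact B) : IsCompact (coordProd A B) :=
  ((PiLp.homeomorph 2 fun _ : Fin 2 => ℝ).trans Homeomorph.finTwoArrow).isCompact_preimage.2
    (hA.prod hB)

lemma map_coords_volume_restrict_coordProd :
    (volume.restrict (coordProd A B)).map (fun x => (x 0, x 1)) =
      (volume.restrict A).prod (volume.restrict B) := by
  let coords := (MeasurableEquiv.toLp 2 (Fin 2 → ℝ)).symm.trans MeasurableEquiv.finTwoArrow
  have preserving : MeasurePreserving coords :=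
    (volume_preserving_finTwoArrow ℝ).comp (PiLp.volume_preserving_ofLp (Fin 2))
  rw [Measure.prod_restrict, ← Measure.volume_eq_prod]
  exact (preserving.restrict_preimage_emb coords.measurableEmbedding (A ×ˢ B)).map_eq

lemma volume_coordProd : volume (coordProd A B) = volume A * volume B := by
  have mass := congrArg (· univ) (map_coords_volume_restrict_coordProd (A := A) (B := B))
  rw [← univ_prod_univ, Measure.prod_prod] at mass
  rw [← Measure.restrict_apply_univ (coordProd A B)]
  simpa [Measure.map_apply (f := fun x : EuclideanSpace ℝ (Fin 2) => (x 0, x 1)) (by fun_prop)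
    MeasurableSet.univ] using mass

variable {g h g' h' : ℝ → ℝ}

lemma map_add_coords_restrict_coordProd (hg : Measurable g) (hh : Measurable h) :
    (volume.restrict (coordProd A B)).map (fun x => g (x 0) + h (x 1)) =
      (volume.restrict A).map g ∗ (volume.restrict B).map h := by
  rw [Measure.conv, Measure.map_prod_map _ _ hg hh, ← map_coords_volume_restrict_coordProd,
    Measure.map_map (by fun_prop) (by fun_prop), Measure.map_map (by fun_prop) (by fun_prop)]
  rfl

lemma uniqueDiffOn_unitSquare : UniqueDiffOn ℝ unitSquare := by
  have preimage : unitSquare = EuclideanSpace.equiv (Fin 2) ℝ ⁻¹' univ.pi fun _ => Icc 0 1 :=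
    Set.ext fun _ => mem_univ_pi.symm
  rw [preimage]
  exact (EuclideanSpace.equiv (Fin 2) ℝ).uniqueDiffOn_preimage_iff.2
    (UniqueDiffOn.univ_pi fun _ => uniqueDiffOn_Icc_zero_one)

/-- The linear form on the plane with coefficients `a` and `b`. -/
def coordForm (a b : ℝ) : EuclideanSpace ℝ (Fin 2) →L[ℝ] ℝ :=
  a • EuclideanSpace.proj 0 + b • EuclideanSpace.proj 1

lemma dist_coordForm_le (a b c d : ℝ) :
    dist (coordForm a b) (coordForm c d) ≤ dist a c + dist b d := by
  have smul_proj_le (r : ℝ) (i : Fin 2) :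
      ‖r • (EuclideanSpace.proj i : EuclideanSpace ℝ (Fin 2) →L[ℝ] ℝ)‖ ≤ ‖r‖ := by
    rw [norm_smul]
    refine mul_le_of_le_one_right (norm_nonneg r) ?_
    refine ContinuousLinearMap.opNorm_le_bound _ zero_le_one fun x => ?_
    rw [one_mul]
    exact PiLp.norm_apply_le x i
  calc dist (coordForm a b) (coordForm c d)
      ≤ dist (a • EuclideanSpace.proj 0) _ + dist (b • EuclideanSpace.proj 1) _ :=
        dist_add_add_le _ _ _ _
    _ ≤ dist a c + dist b d := by
        rw [dist_eq_norm, dist_eq_norm, ← sub_smul, ← sub_smul]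
        exact add_le_add (smul_proj_le _ 0) (smul_proj_le _ 1)

lemma hasFDerivAt_add_coords (hg : ∀ t, HasDerivAt g (g' t) t) (hh : ∀ t, HasDerivAt h (h' t) t)
    (x : EuclideanSpace ℝ (Fin 2)) :
    HasFDerivAt (fun x : EuclideanSpace ℝ (Fin 2) => g (x 0) + h (x 1))
      (coordForm (g' (x 0)) (h' (x 1))) x := by
  have coord (i : Fin 2) : HasFDerivAt (fun x : EuclideanSpace ℝ (Fin 2) => x i)
      (EuclideanSpace.proj i : EuclideanSpace ℝ (Fin 2) →L[ℝ] ℝ) x :=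
    (EuclideanSpace.proj i : EuclideanSpace ℝ (Fin 2) →L[ℝ] ℝ).hasFDerivAt
  exact ((hg _).comp_hasFDerivAt x (coord 0)).add ((hh _).comp_hasFDerivAt x (coord 1))

lemma fderivWithin_add_coords (hg : ∀ t, HasDerivAt g (g' t) t) (hh : ∀ t, HasDerivAt h (h' t) t)
    {x : EuclideanSpace ℝ (Fin 2)} (hx : x ∈ unitSquare) :
    fderivWithin ℝ (fun x : EuclideanSpace ℝ (Fin 2) => g (x 0) + h (x 1)) unitSquare x =
      coordForm (g' (x 0)) (h' (x 1)) :=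
  (hasFDerivAt_add_coords hg hh x).hasFDerivWithinAt.fderivWithin (uniqueDiffOn_unitSquare x hx)

lemma isC1Holder_add_coords (hg : ∀ t, HasDerivAt g (g' t) t) (hh : ∀ t, HasDerivAt h (h' t) t)
    {C D α : ℝ≥0} (hα : 0 < α) (hg' : HolderWith C α g') (hh' : HolderWith D α h') :
    IsC1Holder (fun x => g (x 0) + h (x 1)) α := by
  have dist_coord_le (x y : EuclideanSpace ℝ (Fin 2)) (i : Fin 2) :
      dist (x i) (y i) ≤ dist x y := by
    simpa [dist_eq_norm] using PiLp.norm_apply_le (x - y) i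
  have holder : HolderWith (C + D) α fun x : EuclideanSpace ℝ (Fin 2) =>
      coordForm (g' (x 0)) (h' (x 1)) := by
    refine holderWith_of_dist_le fun x y => ?_
    calc _ ≤ dist (g' (x 0)) (g' (y 0)) + dist (h' (x 1)) (h' (y 1)) := dist_coordForm_le _ _ _ _
      _ ≤ C * dist (x 0) (y 0) ^ (α : ℝ) + D * dist (x 1) (y 1) ^ (α : ℝ) :=
        add_le_add (hg'.dist_le _ _) (hh'.dist_le _ _)
      _ ≤ C * dist x y ^ (α : ℝ) + D * dist x y ^ (α : ℝ) := by
        gcongr <;> exact dist_coord_le x y _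
      _ = (C + D : ℝ≥0) * dist x y ^ (α : ℝ) := by push_cast; ring
  have gradient := @fderivWithin_add_coords g h g' h' hg hh
  refine ⟨fun x _ => (hasFDerivAt_add_coords hg hh x).differentiableAt.differentiableWithinAt,
    (holder.continuous hα).continuousOn.congr fun x hx => gradient hx,
    (C + D : ℝ≥0), fun x hx y hy => ?_⟩
  rw [gradient hx, gradient hy, ← dist_eq_norm]
  exact holder.dist_le x y

end Plane

/-- There exist `f : [0,1]² → ℝ` of class `C^{1,α}` for every `α ∈ (0,1)` and a compact
set `K ⊆ [0,1]²` with `L²(K) = r > 0`, such that `∇f = 0` on `K` and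
`f_#(𝟙_K L²) = r · 𝟙_{[0,1]} L¹`. -/
theorem exists_C1Holder_critical_compact_with_uniform_pushforward :
    ∃ (f : EuclideanSpace ℝ (Fin 2) → ℝ) (K : Set (EuclideanSpace ℝ (Fin 2))) (r : ℝ),
      (∀ α ∈ Set.Ioo (0:ℝ) 1, IsC1Holder f α) ∧
      IsCompact K ∧ K ⊆ unitSquare ∧
      0 < r ∧ volume K = ENNReal.ofReal r ∧
      (∀ x ∈ K, fderivWithin ℝ f unitSquare x = 0) ∧
      Measure.map f (volume.restrict K) =
        ENNReal.ofReal r • volume.restrict (Set.Icc (0:ℝ) 1) := by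
  let S := dyadicGaps
  have deriv_two (t : ℝ) : HasDerivAt (fun t => 2 * profile t) (2 * profileDeriv t) t :=
    (hasDerivAt_profile t).const_mul 2
  have subset : coordProd S.cantorSet S.cantorSet ⊆ unitSquare := fun x hx =>
    unitSquare_eq_coordProd ▸ ⟨S.cantorSet_subset hx.1, S.cantorSet_subset hx.2⟩
  refine ⟨fun x => 2 * profile (x 0) + profile (x 1), coordProd S.cantorSet S.cantorSet,
    S.size * S.size, fun α hα => ?_,
    isCompact_coordProd S.isCompact_cantorSet S.isCompact_cantorSet, subset,
    mul_pos S.size_pos S.size_pos, ?_, fun x hx => ?_, ?_⟩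
  · lift α to ℝ≥0 using hα.1.le
    obtain ⟨C, hC⟩ := exists_holderWith_profileDeriv (α := α) (by exact_mod_cast hα.2)
    exact isC1Holder_add_coords deriv_two hasDerivAt_profile (by exact_mod_cast hα.1)
      (hC.smul (2 : ℝ)) hC
  · rw [volume_coordProd, S.volume_cantorSet, ENNReal.ofReal_mul S.size_pos.le]
  · rw [fderivWithin_add_coords deriv_two hasDerivAt_profile (subset hx),
      profileDeriv_of_mem_cantorSet hx.1, profileDeriv_of_mem_cantorSet hx.2]
    simp [coordForm]
  · rw [map_add_coords_restrict_coordProd (measurable_profile.const_mul 2) measurable_profile]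
    exact map_two_mul_profile_conv
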